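/- arXiv:2103.11917 — 2 statements merged into one kernel-verified Lean document; each statement's English description precedes it below -/
import Mathlib

section
/- For every digraph D, the digrundy number of D equals the diochromatic number of D: dG(D) = dc^o(D). -/
/-!
One inequality holds because a greedy coloring is itself parsimonious
(`greedy_isParsimonious`), so the minimum over parsimonious colorings along `e` is at most the
greedy count along `e`.

For the other, take the greedy coloring along an optimal ordering `e` and re-order the vertices
class by class: all of color 1, then all of color 2, and so on. Each vertex of color `m` closes a
directed cycle with the whole class of every smaller color, and these classes are complete by the
time it is reached, so a parsimonious coloring can neither give it a smaller color nor avoid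
opening color `m`. Hence the greedy coloring is the only parsimonious coloring along the new
ordering (`parsimonious_unique`), whose parsimonious number is therefore the greedy count of `e`.
-/

/-
Common definitions.

A digraph `D : Digraph V` on a finite vertex type `V` is loopless when
`∀ v, ¬ D.Adj v v` (this appears as a hypothesis in the theorems below).
-/

namespace Paper

open Function

variable {V : Type*}

/-- A set `S` of vertices of `D` is acyclic if the arc relation restricted to `S`
admits no vertex with a nonempty directed walk from itself back to itself
(i.e. the subdigraph induced on `S` has no directed cycle). -/
def AcyclicSet (D : Digraph V) (S : Set V) : Prop :=
  ∀ v : V, ¬ Relation.TransGen (fun a b => a ∈ S ∧ b ∈ S ∧ D.Adj a b) v v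

/-- An acyclic coloring: every color class is acyclic. -/
def IsAcyclicColoring (D : Digraph V) {k : ℕ} (c : V → Fin k) : Prop :=
  ∀ i : Fin k, AcyclicSet D {v | c v = i}

/-- A complete coloring: for every ordered pair of distinct colors there is an arc
from a vertex of the first color to a vertex of the second color. -/
def IsCompleteColoring (D : Digraph V) {k : ℕ} (c : V → Fin k) : Prop :=
  ∀ i j : Fin k, i ≠ j → ∃ u v : V, D.Adj u v ∧ c u = i ∧ c v = j

/-- The dichromatic number `dc(D)`: the least number of colors in an acyclic coloring. -/
noncomputable def dichromatic (D : Digraph V) [Fintype V] : ℕ :=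
  sInf {k : ℕ | ∃ c : V → Fin k, IsAcyclicColoring D c}

/-- The diachromatic number `dac(D)`: the largest number of colors in an acyclic
complete coloring (a coloring "with `k` colors" uses all `k` colors, i.e. is surjective). -/
noncomputable def diachromatic (D : Digraph V) [Fintype V] : ℕ :=
  sSup {k : ℕ | ∃ c : V → Fin k,
    Surjective c ∧ IsAcyclicColoring D c ∧ IsCompleteColoring D c}

/-- The color (a positive integer; `1` is the first color) that the greedy algorithm,
run along the vertex ordering `e` (position `0` first), assigns to the vertex in
position `i`: namely the smallest positive color whose current class stays acyclic
after adding this vertex (a fresh color has an empty class, so for a loopless digraph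
this in particular uses a new color exactly when the vertex forms a directed cycle
with every currently used class). -/
noncomputable def greedyColorAt (D : Digraph V) [Fintype V]
    (e : Fin (Fintype.card V) ≃ V) (i : Fin (Fintype.card V)) : ℕ :=
  sInf {c : ℕ | 1 ≤ c ∧
    AcyclicSet D (insert (e i)
      {v : V | ∃ j : Fin (Fintype.card V), ∃ _ : j < i, e j = v ∧ greedyColorAt D e j = c})}
termination_by i.val
decreasing_by exact ‹_›

/-- The greedy coloring of `D` with respect to the vertex ordering `e`. -/
noncomputable def greedyColoring (D : Digraph V) [Fintype V]
    (e : Fin (Fintype.card V) ≃ V) : V → ℕ :=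
  fun v => greedyColorAt D e (e.symm v)

/-- The number of colors used by the greedy coloring with respect to `e`. -/
noncomputable def greedyCount (D : Digraph V) [Fintype V]
    (e : Fin (Fintype.card V) ≃ V) : ℕ :=
  (Finset.univ.image (greedyColoring D e)).card

/-- The digrundy number `dG(D)`: the largest number of colors used by a greedy
coloring, over all orderings of the vertices. -/
noncomputable def digrundy (D : Digraph V) [Fintype V] : ℕ :=
  sSup {k : ℕ | ∃ e : Fin (Fintype.card V) ≃ V, greedyCount D e = k}

/-- The complement of a digraph: arcs are exactly the ordered pairs of distinct
vertices that are not arcs of `D`. -/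
def digraphCompl (D : Digraph V) : Digraph V :=
  ⟨fun u v => u ≠ v ∧ ¬ D.Adj u v⟩

/-- The maximum out-degree `Δ⁺(D)`. -/
noncomputable def maxOutDegree (D : Digraph V) [Fintype V] : ℕ :=
  ⨆ v : V, {u : V | D.Adj v u}.ncard

/-- The maximum in-degree `Δ⁻(D)`. -/
noncomputable def maxInDegree (D : Digraph V) [Fintype V] : ℕ :=
  ⨆ v : V, {u : V | D.Adj u v}.ncard

/-- The clique number `ω(D)`: the maximum size of a set of vertices every two of
which are joined by arcs in both directions. -/
noncomputable def cliqueNumber (D : Digraph V) [Fintype V] : ℕ :=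
  sSup {k : ℕ | ∃ S : Finset V, S.card = k ∧ ∀ u ∈ S, ∀ v ∈ S, u ≠ v → D.Adj u v}

/-- The subdigraph of `D` induced on a set `S` of vertices. -/
def induceD (D : Digraph V) (S : Set V) : Digraph S :=
  ⟨fun u v => D.Adj u v⟩

/-- A parsimonious coloring along the vertex ordering `e`: an acyclic coloring, built
along `e`, in which each vertex must receive an already-used color whenever some
existing color class remains acyclic upon adding the vertex, and receives the smallest
unused positive integer only if adding it to every existing class creates a directed
cycle. -/
def IsParsimonious (D : Digraph V) [Fintype V]
    (e : Fin (Fintype.card V) ≃ V) (c : V → ℕ) : Prop :=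
  (∀ i : ℕ, AcyclicSet D {v | c v = i}) ∧
  ∀ i : Fin (Fintype.card V),
    ((∃ d : ℕ, (∃ j, j < i ∧ c (e j) = d) ∧
        AcyclicSet D (insert (e i) {v : V | ∃ j, j < i ∧ e j = v ∧ c v = d})) →
      ∃ j, j < i ∧ c (e j) = c (e i)) ∧
    ((¬ ∃ d : ℕ, (∃ j, j < i ∧ c (e j) = d) ∧
        AcyclicSet D (insert (e i) {v : V | ∃ j, j < i ∧ e j = v ∧ c v = d})) →
      c (e i) = sInf {m : ℕ | 1 ≤ m ∧ ∀ j, j < i → c (e j) ≠ m})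

/-- The parsimonious `e`-coloring number `dc_e(D)`: the minimum number of colors in a
parsimonious coloring along `e`. -/
noncomputable def parsimoniousNumber (D : Digraph V) [Fintype V]
    (e : Fin (Fintype.card V) ≃ V) : ℕ :=
  sInf {k : ℕ | ∃ c : V → ℕ, IsParsimonious D e c ∧ (Finset.univ.image c).card = k}

/-- The diochromatic number `dc^o(D)`: the maximum of the parsimonious coloring
numbers over all orderings of the vertices. -/
noncomputable def diochromatic (D : Digraph V) [Fintype V] : ℕ :=
  sSup {k : ℕ | ∃ e : Fin (Fintype.card V) ≃ V, parsimoniousNumber D e = k}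

end Paper

namespace Paper

section Orderings

variable {V : Type*}

lemma AcyclicSet.mono {D : Digraph V} {S T : Set V} (h : AcyclicSet D T) (hST : S ⊆ T) :
    AcyclicSet D S := fun v hv =>
  h v (Relation.TransGen.mono (fun _ _ hab => ⟨hST hab.1, hST hab.2.1, hab.2.2⟩) _ _ hv)

lemma acyclicSet_empty (D : Digraph V) : AcyclicSet D ∅ := by
  intro v hv
  rcases Relation.TransGen.head'_iff.1 hv with ⟨b, hb, -⟩
  exact hb.1

lemma acyclicSet_singleton {D : Digraph V} (hD : ∀ v : V, ¬ D.Adj v v) (v : V) :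
    AcyclicSet D {v} := by
  intro w hw
  rcases Relation.TransGen.head'_iff.1 hw with ⟨b, ⟨h1, h2, h3⟩, -⟩
  rw [Set.mem_singleton_iff] at h1 h2
  subst h1 h2
  exact hD _ h3

variable [Fintype V]

/-- The vertices of color `m` at positions before `i` in the greedy coloring along `e`. -/
def prefixClass (D : Digraph V) (e : Fin (Fintype.card V) ≃ V) (i : Fin (Fintype.card V))
    (m : ℕ) : Set V :=
  {v : V | ∃ j, j < i ∧ e j = v ∧ greedyColorAt D e j = m}

lemma greedyColorAt_eq (D : Digraph V) (e : Fin (Fintype.card V) ≃ V)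
    (i : Fin (Fintype.card V)) :
    greedyColorAt D e i =
      sInf {m : ℕ | 1 ≤ m ∧ AcyclicSet D (insert (e i) (prefixClass D e i m))} := by
  rw [greedyColorAt]
  simp only [prefixClass, exists_prop]

lemma greedyColorAt_spec {D : Digraph V} (hD : ∀ v : V, ¬ D.Adj v v)
    (e : Fin (Fintype.card V) ≃ V) (i : Fin (Fintype.card V)) :
    1 ≤ greedyColorAt D e i ∧
      AcyclicSet D (insert (e i) (prefixClass D e i (greedyColorAt D e i))) := by
  have hne : {m : ℕ | 1 ≤ m ∧
      AcyclicSet D (insert (e i) (prefixClass D e i m))}.Nonempty := by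
    -- A color larger than every color in use has an empty class.
    refine ⟨(∑ j, greedyColorAt D e j) + 1, by omega, ?_⟩
    refine (acyclicSet_singleton hD (e i)).mono ?_
    rintro v (rfl | ⟨j, -, -, hj⟩)
    · rfl
    · have := Finset.single_le_sum (f := greedyColorAt D e) (fun _ _ => Nat.zero_le _)
        (Finset.mem_univ j)
      omega
  have := Nat.sInf_mem hne
  rw [← greedyColorAt_eq] at this
  exact this

lemma not_acyclic_of_lt {D : Digraph V} {e : Fin (Fintype.card V) ≃ V}
    {i : Fin (Fintype.card V)} {m : ℕ} (hm : 1 ≤ m) (h : m < greedyColorAt D e i) :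
    ¬ AcyclicSet D (insert (e i) (prefixClass D e i m)) := by
  intro hac
  rw [greedyColorAt_eq] at h
  exact Nat.notMem_of_lt_sInf h ⟨hm, hac⟩

lemma exists_prefix_of_lt {D : Digraph V} (hD : ∀ v : V, ¬ D.Adj v v)
    {e : Fin (Fintype.card V) ≃ V} {i : Fin (Fintype.card V)} {m : ℕ} (hm : 1 ≤ m)
    (h : m < greedyColorAt D e i) : ∃ j, j < i ∧ greedyColorAt D e j = m := by
  by_contra hcon
  refine not_acyclic_of_lt hm h ((acyclicSet_singleton hD (e i)).mono ?_)
  rintro v (rfl | ⟨j, hj, -, hjm⟩)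
  · rfl
  · exact absurd ⟨j, hj, hjm⟩ hcon

@[simp] lemma greedyColoring_apply (D : Digraph V) (e : Fin (Fintype.card V) ≃ V)
    (i : Fin (Fintype.card V)) : greedyColoring D e (e i) = greedyColorAt D e i := by
  simp [greedyColoring]

lemma greedyColoring_acyclic {D : Digraph V} (hD : ∀ v : V, ¬ D.Adj v v)
    (e : Fin (Fintype.card V) ≃ V) (m : ℕ) : AcyclicSet D {v | greedyColoring D e v = m} := by
  classical
  by_cases hne : (Finset.univ.filter fun i => greedyColorAt D e i = m).Nonempty
  · -- Adding the last vertex of the class to the rest of it was checked by the algorithm.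
    obtain ⟨i, hi, hmax⟩ := Finset.exists_max_image _ id hne
    have him : greedyColorAt D e i = m := by simpa using hi
    have hac := (greedyColorAt_spec hD e i).2
    rw [him] at hac
    refine hac.mono fun v hv => ?_
    obtain ⟨j, rfl⟩ := e.surjective v
    simp only [Set.mem_ofPred_eq, greedyColoring_apply] at hv
    rcases (show j ≤ i from hmax j (by simpa using hv)).eq_or_lt with rfl | hlt
    · exact Set.mem_insert _ _
    · exact Set.mem_insert_of_mem _ ⟨j, hlt, rfl, hv⟩
  · refine (acyclicSet_empty D).mono fun v hv => hne ⟨e.symm v, ?_⟩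
    simpa [greedyColoring] using hv

lemma greedy_isParsimonious {D : Digraph V} (hD : ∀ v : V, ¬ D.Adj v v)
    (e : Fin (Fintype.card V) ≃ V) : IsParsimonious D e (greedyColoring D e) := by
  refine ⟨greedyColoring_acyclic hD e, fun i => ?_⟩
  have hset : ∀ d, {v : V | ∃ j, j < i ∧ e j = v ∧ greedyColoring D e v = d} =
      prefixClass D e i d := by
    intro d
    ext v
    constructor
    · rintro ⟨j, hj, rfl, h⟩
      exact ⟨j, hj, rfl, by simpa using h⟩
    · rintro ⟨j, hj, rfl, h⟩
      exact ⟨j, hj, rfl, by simpa using h⟩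
  simp only [hset, greedyColoring_apply]
  obtain ⟨hpos, hac⟩ := greedyColorAt_spec hD e i
  constructor
  · rintro ⟨d, ⟨j, hj, rfl⟩, hd⟩
    rcases lt_trichotomy (greedyColorAt D e i) (greedyColorAt D e j) with h | h | h
    · -- Colors below that of `e j` were all opened before `e j`.
      obtain ⟨j', hj', h'⟩ := exists_prefix_of_lt hD hpos h
      exact ⟨j', hj'.trans hj, h'⟩
    · exact ⟨j, hj, h.symm⟩
    · exact absurd hd (not_acyclic_of_lt (greedyColorAt_spec hD e j).1 h)
  · intro hno
    have hmem : greedyColorAt D e i ∈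
        {m : ℕ | 1 ≤ m ∧ ∀ j, j < i → greedyColorAt D e j ≠ m} :=
      ⟨hpos, fun j hj h => hno ⟨_, ⟨j, hj, h⟩, hac⟩⟩
    refine le_antisymm (le_csInf ⟨_, hmem⟩ ?_) (Nat.sInf_le hmem)
    rintro m ⟨hm, hunused⟩
    by_contra! hlt
    obtain ⟨j, hj, hjm⟩ := exists_prefix_of_lt hD hm hlt
    exact hunused j hj hjm

lemma greedyColoring_not_acyclic {D : Digraph V} {e : Fin (Fintype.card V) ≃ V} {v : V} {m : ℕ}
    (hm : 1 ≤ m) (h : m < greedyColoring D e v) :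
    ¬ AcyclicSet D (insert v {u | greedyColoring D e u = m}) := by
  obtain ⟨i, rfl⟩ := e.surjective v
  rw [greedyColoring_apply] at h
  refine fun hac => not_acyclic_of_lt hm h (hac.mono (Set.insert_subset_insert ?_))
  rintro _ ⟨j, -, rfl, hj⟩
  simpa using hj

/-- Along an ordering that lists the classes of a greedy coloring one after another, that greedy
coloring is the only parsimonious one. -/
lemma parsimonious_unique {D : Digraph V} (hD : ∀ v : V, ¬ D.Adj v v)
    {e e' : Fin (Fintype.card V) ≃ V} (hmono : Monotone (greedyColoring D e ∘ e'))
    {c : V → ℕ} (hc : IsParsimonious D e' c) : c = greedyColoring D e := by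
  set g := greedyColoring D e with hg
  have hpos : ∀ v, 1 ≤ g v := fun v => (greedyColorAt_spec hD e _).1
  suffices h : ∀ i, c (e' i) = g (e' i) by
    funext v
    simpa using h (e'.symm v)
  intro i
  induction i using WellFoundedLT.induction with
  | ind i ih =>
  -- A smaller class is complete before position `i`, and already colored as by `g`.
  have hearlier : ∀ u, g u < g (e' i) → ∃ j, j < i ∧ e' j = u ∧ c u = g u := by
    intro u hu
    obtain ⟨j, rfl⟩ := e'.surjective u
    have hj : j < i := by
      by_contra! hle
      exact absurd (hmono hle) (not_le.2 hu)
    exact ⟨j, hj, rfl, ih j hj⟩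
  obtain ⟨hold, hnew⟩ := hc.2 i
  by_cases hused : ∃ j, j < i ∧ g (e' j) = g (e' i)
  · obtain ⟨j, hj, hji⟩ := hused
    obtain ⟨l, hl, hli⟩ := hold ⟨g (e' i), ⟨j, hj, (ih j hj).trans hji⟩, by
      refine (greedyColoring_acyclic hD e (g (e' i))).mono ?_
      rintro _ (rfl | ⟨p, hp, rfl, hpc⟩)
      · rfl
      · exact (ih p hp).symm.trans hpc⟩
    rw [ih l hl] at hli
    rcases (show g (e' l) ≤ g (e' i) from hmono hl.le).eq_or_lt with heq | hlt
    · exact hli.symm.trans heq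
    · refine absurd ((hc.1 (g (e' l))).mono ?_) (greedyColoring_not_acyclic (hpos _) hlt)
      rintro u (rfl | hu)
      · exact hli.symm
      · change g u = g (e' l) at hu
        obtain ⟨p, -, -, hpc⟩ := hearlier u (hu ▸ hlt)
        exact hpc.trans hu
  · rw [hnew]
    · have hmem : g (e' i) ∈ {m : ℕ | 1 ≤ m ∧ ∀ j, j < i → c (e' j) ≠ m} :=
        ⟨hpos _, fun j hj h => hused ⟨j, hj, (ih j hj).symm.trans h⟩⟩
      refine le_antisymm (Nat.sInf_le hmem) (le_csInf ⟨_, hmem⟩ ?_)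
      rintro m ⟨hm, hunused⟩
      by_contra! hlt
      obtain ⟨p, -, hp⟩ := exists_prefix_of_lt hD hm hlt
      rw [← greedyColoring_apply] at hp
      obtain ⟨q, hq, hqp, hqc⟩ := hearlier (e p) (hp.trans_lt hlt)
      exact hunused q hq (by rw [hqp, hqc]; exact hp)
    · rintro ⟨d, ⟨j, hj, rfl⟩, hac⟩
      have hlt : g (e' j) < g (e' i) :=
        lt_of_le_of_ne (hmono hj.le) fun h => hused ⟨j, hj, h⟩
      refine greedyColoring_not_acyclic (hpos _) hlt
        (hac.mono (Set.insert_subset_insert fun u hu => ?_))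
      change g u = g (e' j) at hu
      obtain ⟨p, hp, hpu, hpc⟩ := hearlier u (hu ▸ hlt)
      exact ⟨p, hp, hpu, by rw [hpc, hu, ih j hj]⟩

lemma parsimoniousNumber_le_greedyCount {D : Digraph V} (hD : ∀ v : V, ¬ D.Adj v v)
    (e : Fin (Fintype.card V) ≃ V) : parsimoniousNumber D e ≤ greedyCount D e :=
  Nat.sInf_le ⟨_, greedy_isParsimonious hD e, rfl⟩

lemma greedyCount_le_card (D : Digraph V) (e : Fin (Fintype.card V) ≃ V) :
    greedyCount D e ≤ Fintype.card V :=
  Finset.card_image_le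

lemma exists_parsimoniousNumber_eq {D : Digraph V} (hD : ∀ v : V, ¬ D.Adj v v)
    (e : Fin (Fintype.card V) ≃ V) :
    ∃ e' : Fin (Fintype.card V) ≃ V, parsimoniousNumber D e' = greedyCount D e := by
  let e' := (Tuple.sort (greedyColoring D e ∘ e)).trans e
  have hmono : Monotone (greedyColoring D e ∘ e') := Tuple.monotone_sort (greedyColoring D e ∘ e)
  obtain ⟨c, hc, hk⟩ : parsimoniousNumber D e' ∈
      {k : ℕ | ∃ c : V → ℕ, IsParsimonious D e' c ∧ (Finset.univ.image c).card = k} :=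
    Nat.sInf_mem ⟨_, _, greedy_isParsimonious hD e', rfl⟩
  rw [parsimonious_unique hD hmono hc] at hk
  exact ⟨e', hk.symm⟩

end Orderings

/-- For every digraph `D`, the digrundy number of `D` equals the
diochromatic number of `D`: `dG(D) = dc^o(D)`. -/
theorem digrundy_eq_diochromatic {V : Type*} [Fintype V]
    (D : Digraph V) (hD : ∀ v : V, ¬ D.Adj v v) :
    digrundy D = diochromatic D := by
  let e₀ : Fin (Fintype.card V) ≃ V := (Fintype.equivFin V).symm
  apply le_antisymm
  · refine csSup_le ⟨_, e₀, rfl⟩ ?_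
    rintro _ ⟨e, rfl⟩
    refine le_csSup ⟨Fintype.card V, ?_⟩ (exists_parsimoniousNumber_eq hD e)
    rintro _ ⟨e', rfl⟩
    exact (parsimoniousNumber_le_greedyCount hD e').trans (greedyCount_le_card D e')
  · refine csSup_le ⟨_, e₀, rfl⟩ ?_
    rintro _ ⟨e, rfl⟩
    refine (parsimoniousNumber_le_greedyCount hD e).trans
      (le_csSup ⟨Fintype.card V, ?_⟩ ⟨e, rfl⟩)
    rintro _ ⟨e', rfl⟩
    exact greedyCount_le_card D e'

end Paper
end

section
/- If D is a digraph of order n = 9, then dG(D) + dG(D^c) ≤ 12, where D^c denotes the complement of D. -/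
namespace Paper

/-- If adding `u` to an acyclic set `P` creates a cycle, the cycle passes through `u`, so it leaves
and enters `u` by arcs whose other end is in `P`. -/
lemma exists_adj_of_not_acyclic_insert {V : Type*} (D : Digraph V) (hD : ∀ v : V, ¬ D.Adj v v)
    (u : V) (P : Set V) (hP : AcyclicSet D P) (h : ¬ AcyclicSet D (insert u P)) :
    (∃ w ∈ P, D.Adj u w) ∧ (∃ w ∈ P, D.Adj w u) := by
  unfold AcyclicSet at h
  push Not at h
  obtain ⟨v, hv⟩ := h
  constructor
  · by_contra! hno
    have step : ∀ a b, (a ∈ insert u P ∧ b ∈ insert u P ∧ D.Adj a b) → a ∈ P := by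
      rintro a b ⟨ha, hb, hab⟩
      rcases ha with rfl | ha
      · rcases hb with rfl | hb
        · exact absurd hab (hD _)
        · exact absurd hab (hno _ hb)
      · exact ha
    have key : ∀ b, Relation.TransGen
        (fun a b => a ∈ insert u P ∧ b ∈ insert u P ∧ D.Adj a b) v b → b ∈ P →
        Relation.TransGen (fun a b => a ∈ P ∧ b ∈ P ∧ D.Adj a b) v b := by
      intro b hb
      induction hb with
      | single h1 => exact fun hbP => .single ⟨step _ _ h1, hbP, h1.2.2⟩
      | tail _ h2 ih =>
        exact fun hbP => .tail (ih (step _ _ h2)) ⟨step _ _ h2, hbP, h2.2.2⟩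
    obtain ⟨c, hc, -⟩ := Relation.TransGen.head'_iff.1 hv
    exact hP v (key v hv (step _ _ hc))
  · by_contra! hno
    have step : ∀ a b, (a ∈ insert u P ∧ b ∈ insert u P ∧ D.Adj a b) → b ∈ P := by
      rintro a b ⟨ha, hb, hab⟩
      rcases hb with rfl | hb
      · rcases ha with rfl | ha
        · exact absurd hab (hD _)
        · exact absurd hab (hno _ ha)
      · exact hb
    have key : ∀ b, Relation.TransGen
        (fun a b => a ∈ insert u P ∧ b ∈ insert u P ∧ D.Adj a b) v b → v ∈ P →
        Relation.TransGen (fun a b => a ∈ P ∧ b ∈ P ∧ D.Adj a b) v b := by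
      intro b hb hvP
      induction hb with
      | single h1 => exact .single ⟨hvP, step _ _ h1, h1.2.2⟩
      | tail _ h2 ih =>
        rename_i x y h1
        have hx : x ∈ P := by
          obtain ⟨c, -, hc⟩ := Relation.TransGen.tail'_iff.1 h1
          exact step _ _ hc
        exact .tail ih ⟨hx, step _ _ h2, h2.2.2⟩
    obtain ⟨c, -, hc⟩ := Relation.TransGen.tail'_iff.1 hv
    exact hP v (key v hv (step _ _ hc))

/-- The set of admissible colors is nonempty (any unused color is admissible), so the infimum
defining `greedyColorAt` is attained and is not a junk value. -/
lemma greedyColorAt_mem {V : Type*} [Fintype V] (D : Digraph V) (hD : ∀ v : V, ¬ D.Adj v v)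
    (e : Fin (Fintype.card V) ≃ V) (i : Fin (Fintype.card V)) :
    1 ≤ greedyColorAt D e i ∧ AcyclicSet D (insert (e i)
      {v : V | ∃ j : Fin (Fintype.card V), ∃ _ : j < i,
        e j = v ∧ greedyColorAt D e j = greedyColorAt D e i}) := by
  have hne : {c : ℕ | 1 ≤ c ∧ AcyclicSet D (insert (e i)
      {v : V | ∃ j : Fin (Fintype.card V), ∃ _ : j < i,
        e j = v ∧ greedyColorAt D e j = c})}.Nonempty := by
    refine ⟨(∑ j, greedyColorAt D e j) + 1, by omega, ?_⟩
    have hS : {v : V | ∃ j : Fin (Fintype.card V), ∃ _ : j < i,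
        e j = v ∧ greedyColorAt D e j = (∑ j, greedyColorAt D e j) + 1} = ∅ := by
      ext v
      simp only [Set.mem_ofPred_eq, Set.mem_empty_iff_false, iff_false]
      rintro ⟨j, -, -, hj⟩
      have := Finset.single_le_sum (f := greedyColorAt D e) (fun _ _ => Nat.zero_le _)
        (Finset.mem_univ j)
      omega
    rw [hS]
    intro v hv
    obtain ⟨c, ⟨h1, h2, h3⟩, -⟩ := Relation.TransGen.head'_iff.1 hv
    simp only [Set.mem_insert_iff, Set.mem_empty_iff_false, or_false] at h1 h2
    subst h1 h2
    exact hD _ h3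
  have := Nat.sInf_mem hne
  rw [← greedyColorAt] at this
  exact this

/-- Before each step of the greedy algorithm, every color class is acyclic. -/
lemma acyclicSet_prefix {V : Type*} [Fintype V] (D : Digraph V) (hD : ∀ v : V, ¬ D.Adj v v)
    (e : Fin (Fintype.card V) ≃ V) (c m : ℕ) :
    AcyclicSet D {v : V | ∃ j : Fin (Fintype.card V), ∃ _ : j.val < m,
        e j = v ∧ greedyColorAt D e j = c} := by
  induction m with
  | zero =>
    intro v hv
    obtain ⟨_, ⟨⟨j, hj, -⟩, -⟩, -⟩ := Relation.TransGen.head'_iff.1 hv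
    omega
  | succ m ih =>
    by_cases hm : ∃ h : m < Fintype.card V, greedyColorAt D e ⟨m, h⟩ = c
    · obtain ⟨h, rfl⟩ := hm
      have h2 := (greedyColorAt_mem D hD e ⟨m, h⟩).2
      convert h2 using 1
      ext v
      simp only [Set.mem_ofPred_eq, Set.mem_insert_iff]
      constructor
      · rintro ⟨j, hj, rfl, hc⟩
        rcases Nat.lt_succ_iff_lt_or_eq.1 hj with h3 | h3
        · exact Or.inr ⟨j, h3, rfl, hc⟩
        · left
          congr 1
          exact Fin.ext h3
      · rintro (rfl | ⟨j, hj, rfl, hc⟩)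
        · exact ⟨⟨m, h⟩, Nat.lt_succ_self m, rfl, rfl⟩
        · exact ⟨j, Nat.lt_succ_of_lt hj, rfl, hc⟩
    · convert ih using 1
      ext v
      simp only [Set.mem_ofPred_eq]
      constructor
      · rintro ⟨j, hj, rfl, hc⟩
        rcases Nat.lt_succ_iff_lt_or_eq.1 hj with h3 | h3
        · exact ⟨j, h3, rfl, hc⟩
        · subst h3
          exact absurd ⟨j.2, hc⟩ hm
      · rintro ⟨j, hj, rfl, hc⟩
        exact ⟨j, Nat.lt_succ_of_lt hj, rfl, hc⟩

lemma one_le_greedyColoring {V : Type*} [Fintype V] (D : Digraph V) (hD : ∀ v : V, ¬ D.Adj v v)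
    (e : Fin (Fintype.card V) ≃ V) (v : V) : 1 ≤ greedyColoring D e v :=
  (greedyColorAt_mem D hD e _).1

/-- In a greedy coloring a vertex has an out-neighbour and an in-neighbour in every class of
smaller color. -/
lemma greedyColoring_exists_adj {V : Type*} [Fintype V] (D : Digraph V)
    (hD : ∀ v : V, ¬ D.Adj v v) (e : Fin (Fintype.card V) ≃ V) (u : V) (a : ℕ) (ha : 1 ≤ a)
    (hau : a < greedyColoring D e u) :
    (∃ w, greedyColoring D e w = a ∧ D.Adj u w) ∧
      (∃ w, greedyColoring D e w = a ∧ D.Adj w u) := by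
  have hlt : a < greedyColorAt D e (e.symm u) := hau
  rw [greedyColorAt] at hlt
  have hnot := Nat.notMem_of_lt_sInf hlt
  simp only [Set.mem_ofPred_eq, not_and] at hnot
  have h1 := hnot ha
  rw [Equiv.apply_symm_apply] at h1
  obtain ⟨⟨w, ⟨j, -, rfl, hj⟩, hw⟩, ⟨w', ⟨j', -, rfl, hj'⟩, hw'⟩⟩ :=
    exists_adj_of_not_acyclic_insert D hD u _ (acyclicSet_prefix D hD e a (e.symm u).val) h1
  exact ⟨⟨e j, by simpa [greedyColoring] using hj, hw⟩,
    ⟨e j', by simpa [greedyColoring] using hj', hw'⟩⟩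

/-- The asymmetric inequality `2 k + l ≤ 2 n + 1` for greedy colorings of `D` with `k` colors and
of its complement with `l` colors. -/
lemma two_mul_greedyCount_add_le {V : Type*} [Fintype V] (D : Digraph V)
    (hD : ∀ v : V, ¬ D.Adj v v) (e e' : Fin (Fintype.card V) ≃ V) :
    2 * greedyCount D e + greedyCount (digraphCompl D) e' ≤ 2 * Fintype.card V + 1 := by
  classical
  have hD' : ∀ v : V, ¬ (digraphCompl D).Adj v v := fun v h => h.1 rfl
  unfold greedyCount
  set c := greedyColoring D e with hc
  set c' := greedyColoring (digraphCompl D) e' with hc'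
  let S : Finset V := Finset.univ.filter fun v => ∀ w, c w = c v → w = v
  have hSmem : ∀ v, v ∈ S ↔ ∀ w, c w = c v → w = v := fun v => by simp [S]
  have hcard : S.card + Sᶜ.card = Fintype.card V := Finset.card_add_card_compl S
  have hSadj : ∀ u ∈ S, ∀ v ∈ S, u ≠ v → D.Adj u v := by
    intro u hu v hv huv
    rw [hSmem] at hu hv
    rcases lt_trichotomy (c u) (c v) with h | h | h
    · obtain ⟨-, w, hw, hwv⟩ :=
        greedyColoring_exists_adj D hD e v (c u) (one_le_greedyColoring D hD e u) h
      rwa [hu w hw] at hwv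
    · exact absurd (hv u h) huv
    · obtain ⟨⟨w, hw, hwu⟩, -⟩ :=
        greedyColoring_exists_adj D hD e u (c v) (one_le_greedyColoring D hD e v) h
      rwa [hv w hw] at hwu
  have hk : (Finset.univ.image c).card ≤ S.card + (Sᶜ.image c).card := by
    rw [← Finset.union_compl S, Finset.image_union]
    exact (Finset.card_union_le _ _).trans (Nat.add_le_add_right Finset.card_image_le _)
  have hfib : 2 * (Sᶜ.image c).card ≤ Sᶜ.card := by
    refine Finset.mul_card_image_le_card _ 2 fun b hb => ?_
    obtain ⟨v, hv, rfl⟩ := Finset.mem_image.1 hb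
    have hvS := Finset.mem_compl.1 hv
    rw [hSmem] at hvS
    push Not at hvS
    obtain ⟨w, hw, hwv⟩ := hvS
    have hwS : w ∈ Sᶜ := by
      rw [Finset.mem_compl, hSmem]
      exact fun h => hwv (h v hw.symm).symm
    exact Finset.one_lt_card.2
      ⟨w, Finset.mem_filter.2 ⟨hwS, hw⟩, v, Finset.mem_filter.2 ⟨hv, rfl⟩, hwv⟩
  have hl : (Finset.univ.image c').card ≤ Sᶜ.card + 1 := by
    have hone : (Finset.univ.image c' \ Sᶜ.image c').card ≤ 1 := by
      -- The higher of two `c'`-classes inside `S` would send an arc of the complement to the lower.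
      have main : ∀ u v, c' u ∉ Sᶜ.image c' → c' v ∉ Sᶜ.image c' → ¬ c' u < c' v := by
        intro u v hu hv h
        obtain ⟨⟨w, hw, hvw⟩, -⟩ := greedyColoring_exists_adj (digraphCompl D) hD' e' v (c' u)
          (one_le_greedyColoring _ hD' e' u) h
        have hwS : w ∈ S := by
          by_contra hn
          exact hu (Finset.mem_image.2 ⟨w, Finset.mem_compl.2 hn, hw⟩)
        have hvS : v ∈ S := by
          by_contra hn
          exact hv (Finset.mem_image.2 ⟨v, Finset.mem_compl.2 hn, rfl⟩)
        exact hvw.2 (hSadj v hvS w hwS hvw.1)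
      rw [Finset.card_le_one]
      intro a ha b hb
      rw [Finset.mem_sdiff, Finset.mem_image] at ha hb
      obtain ⟨⟨u, -, rfl⟩, hu⟩ := ha
      obtain ⟨⟨v, -, rfl⟩, hv⟩ := hb
      exact le_antisymm (not_lt.1 (main v u hv hu)) (not_lt.1 (main u v hu hv))
    have h1 := Finset.card_le_card_sdiff_add_card (t := Sᶜ.image c') (s := Finset.univ.image c')
    have h2 : (Sᶜ.image c').card ≤ Sᶜ.card := Finset.card_image_le
    omega
  omega

lemma exists_greedyCount_eq_digrundy {V : Type*} [Fintype V] (D : Digraph V) :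
    ∃ e : Fin (Fintype.card V) ≃ V, greedyCount D e = digrundy D := by
  have hne : {k : ℕ | ∃ e : Fin (Fintype.card V) ≃ V, greedyCount D e = k}.Nonempty :=
    ⟨_, (Fintype.equivFin V).symm, rfl⟩
  refine Nat.sSup_mem hne ⟨Fintype.card V, ?_⟩
  rintro k ⟨e, rfl⟩
  exact Finset.card_image_le

lemma digraphCompl_digraphCompl {V : Type*} (D : Digraph V) (hD : ∀ v : V, ¬ D.Adj v v) :
    digraphCompl (digraphCompl D) = D := by
  ext u v
  simp only [digraphCompl]
  constructor
  · rintro ⟨h, hcompl⟩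
    by_contra hn
    exact hcompl ⟨h, hn⟩
  · intro h
    exact ⟨fun huv => hD v (huv ▸ h), fun hcompl => hcompl.2 h⟩

/-- If `D` is a digraph of order `n = 9`, then `dG(D) + dG(Dᶜ) ≤ 12`. -/
theorem digrundy_nordhaus_gaddum_nine {V : Type*} [Fintype V]
    (D : Digraph V) (hD : ∀ v : V, ¬ D.Adj v v)
    (hn : Fintype.card V = 9) :
    digrundy D + digrundy (digraphCompl D) ≤ 12 := by
  obtain ⟨e, he⟩ := exists_greedyCount_eq_digrundy D
  obtain ⟨e', he'⟩ := exists_greedyCount_eq_digrundy (digraphCompl D)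
  have h1 := two_mul_greedyCount_add_le D hD e e'
  have h2 := two_mul_greedyCount_add_le (digraphCompl D) (fun v h => h.1 rfl) e' e
  rw [digraphCompl_digraphCompl D hD] at h2
  omega

end Paper
end
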